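/- Consider a normal form game with nonempty player set N, strategy sets S_i and payoff functions u_i : ∏_j S_j → C_i with each C_i a linearly ordered set. Assume that for every i ∈ N: (1) S_i is a complete lattice; (2) for every s_{-i} ∈ S_{-i}, the section u_i(·, s_{-i}) : S_i → C_i is weakly quasisupermodular; (3) u_i satisfies the single crossing property relative to (S_i, S_{-i}); (4) for every s_{-i} ∈ S_{-i} and every t ∈ C_i, the set [u_i(·, s_{-i}) ≥ t] = {a ∈ S_i : u_i(a, s_{-i}) ≥ t}, with the order induced from S_i, is chain-complete downwards and chain-bounded above. Then the set E of Nash equilibria is nonempty and is a complete lattice in the order induced from the product order on ∏_j S_j: every subset A ⊆ E has a least upper bound in E and a greatest lower bound in E. -/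

import Mathlib

open Classical in
/-- Combine a strategy `a` of player `i` with a joint strategy `t` of the other players
into a joint strategy of all players. -/
noncomputable def combine {N : Type*} {S : N → Type*} (i : N) (a : S i)
    (t : ∀ j : {j : N // j ≠ i}, S j.1) : ∀ j, S j :=
  fun j => if h : j = i then cast (congrArg S h.symm) a else t ⟨j, h⟩

/-- A joint strategy `x` is a Nash equilibrium: no player `i` can improve the payoff
`u i x` by a unilateral deviation `y`. -/
def IsNashEquilibrium {N : Type*} {S : N → Type*} {C : N → Type*} [∀ i, LinearOrder (C i)]
    (u : ∀ i, (∀ j, S j) → C i) (x : ∀ j, S j) : Prop :=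
  ∀ i, ∀ y : S i, u i (combine i y (fun j => x j.1)) ≤ u i x

/-- `f` is weakly quasisupermodular if `f (x ⊓ y) < f x → f x ⊓ f y < f (x ⊔ y)` and
`f (x ⊔ y) < f x → f x ⊓ f y < f (x ⊓ y)` for all `x, y`. -/
def WeaklyQuasisupermodular {X C : Type*} [Lattice X] [LinearOrder C] (f : X → C) : Prop :=
  ∀ x y : X, (f (x ⊓ y) < f x → f x ⊓ f y < f (x ⊔ y)) ∧
    (f (x ⊔ y) < f x → f x ⊓ f y < f (x ⊓ y))

/-- A subset `A` of a poset is chain-complete downwards if every nonempty chain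
contained in `A` has a greatest lower bound within `A` (in the induced order). -/
def ChainCompleteDownwardsOn {X : Type*} [PartialOrder X] (A : Set X) : Prop :=
  ∀ c : Set X, c ⊆ A → c.Nonempty → IsChain (· ≤ ·) c →
    ∃ m ∈ A, (∀ x ∈ c, m ≤ x) ∧ ∀ b ∈ A, (∀ x ∈ c, b ≤ x) → b ≤ m

/-- A subset `A` of a poset is chain-bounded above if every nonempty chain contained
in `A` has an upper bound belonging to `A`. -/
def ChainBoundedAboveOn {X : Type*} [PartialOrder X] (A : Set X) : Prop :=
  ∀ c : Set X, c ⊆ A → c.Nonempty → IsChain (· ≤ ·) c → ∃ u ∈ A, ∀ x ∈ c, x ≤ u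

theorem exists_min_aux {X : Type*} [PartialOrder X] (V : Set X)
    (h : ∀ c : Set X, c ⊆ V → c.Nonempty → IsChain (· ≤ ·) c → ∃ m ∈ V, ∀ x ∈ c, m ≤ x)
    (w : X) (hw : w ∈ V) : ∃ m ∈ V, m ≤ w ∧ ∀ z ∈ V, z ≤ m → m ≤ z := by
  obtain ⟨m, hm, hmax⟩ := zorn_le_nonempty₀ (α := Xᵒᵈ) (OrderDual.ofDual ⁻¹' V)
    (fun c hc hch y hy => by
      obtain ⟨m, hm, hm'⟩ := h (OrderDual.toDual ⁻¹' c) (fun x hx => hc hx) ⟨_, hy⟩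
        (fun a ha b hb hab => (hch ha hb hab).symm)
      exact ⟨OrderDual.toDual m, hm, fun z hz => hm' _ hz⟩) (OrderDual.toDual w) hw
  exact ⟨OrderDual.ofDual m, hmax.1, hm, fun z hz hzm => hmax.2 (y := OrderDual.toDual z) hz hzm⟩

theorem exists_max_aux {X : Type*} [PartialOrder X] (V : Set X)
    (h : ChainBoundedAboveOn V)
    (w : X) (hw : w ∈ V) : ∃ m ∈ V, w ≤ m ∧ ∀ z ∈ V, m ≤ z → z ≤ m := by
  obtain ⟨m, hm, hmax⟩ := zorn_le_nonempty₀ V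
    (fun c hc hch y hy => h c hc ⟨y, hy⟩ hch) w hw
  exact ⟨m, hmax.1, hm, fun z hz hzm => hmax.2 hz hzm⟩

theorem exists_min_ub {X : Type*} [PartialOrder X] (L K : Set X)
    (h : ChainCompleteDownwardsOn L) (hK : K ⊆ L) (w : X) (hw : w ∈ L) (hw' : ∀ k ∈ K, k ≤ w) :
    ∃ m ∈ L, (∀ k ∈ K, k ≤ m) ∧ ∀ z ∈ L, (∀ k ∈ K, k ≤ z) → z ≤ m → m ≤ z := by
  obtain ⟨m, hm, -, hmin⟩ := exists_min_aux {w | w ∈ L ∧ ∀ k ∈ K, k ≤ w} (by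
    intro c hc hne hch
    obtain ⟨m, hm, h1, h2⟩ := h c (fun x hx => (hc hx).1) hne hch
    exact ⟨m, ⟨hm, fun k hk => h2 k (hK hk) (fun x hx => (hc hx).2 k hk)⟩, h1⟩) w ⟨hw, hw'⟩
  exact ⟨m, hm.1, hm.2, fun z hz hz' => hmin z ⟨hz, hz'⟩⟩

theorem exists_argmax {X C : Type*} [CompleteLattice X] [LinearOrder C] (f : X → C)
    (hw : WeaklyQuasisupermodular f)
    (hcc : ∀ c, ChainCompleteDownwardsOn {a | c ≤ f a})
    (hba : ∀ c, ChainBoundedAboveOn {a | c ≤ f a}) : ∃ p, ∀ x, f x ≤ f p := by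
  let Q : Set X := {p | ∀ x₀ : X, ∀ K : Set X, (∀ k ∈ K, f x₀ ≤ f k) → ∀ w, f x₀ ≤ f w →
    (∀ k ∈ K, k ≤ w) → (∀ z, f x₀ ≤ f z → (∀ k ∈ K, k ≤ z) → z ≤ w → w ≤ z) →
    (∀ k ∈ K, k ≤ p) → w ≤ p}
  have hpQ : sInf Q ∈ Q := by
    intro x₀ K hK w h1 h2 h3 h4
    exact le_sInf fun p hp => hp x₀ K hK w h1 h2 h3 fun k hk => (h4 k hk).trans (sInf_le hp)
  set p := sInf Q with hp
  let Mx : Set X := {y | y ≤ p ∧ ∃ x₀, f x₀ ≤ f y ∧ ∀ z, f x₀ ≤ f z → z ≤ p → y ≤ z → z ≤ y}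
  have hp'Q : p ⊓ sInf Mx ∈ Q := by
    intro x₀ K hK w h1 h2 h3 h4
    have hwp : w ≤ p := hpQ x₀ K hK w h1 h2 h3 fun k hk => (h4 k hk).trans inf_le_left
    refine le_inf hwp (le_sInf ?_)
    rintro y hy
    have hKy : ∀ k ∈ K, k ≤ y := fun k hk => (h4 k hk).trans (inf_le_right.trans (sInf_le hy))
    obtain ⟨hyp, y₀, hy0, hymax⟩ := hy
    by_contra hwy
    have e1 : f (w ⊓ y) < f x₀ := by
      by_contra hcon
      exact hwy ((h3 (w ⊓ y) (not_lt.1 hcon) (fun k hk => le_inf (h2 k hk) (hKy k hk))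
        inf_le_left).trans inf_le_right)
    have e2 : f (w ⊔ y) < f y₀ := by
      by_contra hcon
      exact hwy (le_sup_left.trans (hymax (w ⊔ y) (not_lt.1 hcon) (sup_le hwp hyp) le_sup_right))
    have e3 := (hw w y).1 (e1.trans_le h1)
    have e4 := (hw y w).2 (by rw [sup_comm]; exact e2.trans_le hy0)
    rw [inf_comm y w] at e4
    rcases le_total (f w) (f y) with h | h
    · rw [inf_eq_right.2 h] at e4
      exact absurd (e4.trans e1) (not_lt.2 h1)
    · rw [inf_eq_right.2 h] at e3
      exact absurd (e3.trans e2) (not_lt.2 hy0)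
  have hple : p ≤ sInf Mx := (sInf_le hp'Q).trans inf_le_right
  refine ⟨p, fun x => ?_⟩
  obtain ⟨m, hm, -, hmin⟩ := exists_min_ub {a | f x ≤ f a} ∅ (hcc (f x)) (by simp) x
    (le_refl (f x)) (by simp)
  have hmp : m ≤ p := hpQ x ∅ (by simp) m hm (by simp) (fun z hz => hmin z hz) (by simp)
  obtain ⟨y, hy, -, hymax⟩ := exists_max_aux {a | f x ≤ f a ∧ a ≤ p} (by
    intro c hc hne hch
    obtain ⟨b, hb, hb'⟩ := hba (f x) c (fun a ha => (hc ha).1) hne hch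
    obtain ⟨w, hw1, hw2, hw3⟩ := exists_min_ub {a | f x ≤ f a} c (hcc (f x))
      (fun a ha => (hc ha).1) b hb hb'
    exact ⟨w, ⟨hw1, hpQ x c (fun k hk => (hc hk).1) w hw1 hw2 (fun z hz => hw3 z hz)
      (fun k hk => (hc hk).2)⟩, hw2⟩) m ⟨hm, hmp⟩
  have : p ≤ y := hple.trans (sInf_le ⟨hy.2, x, hy.1, fun z h1 h2 h3 => hymax z ⟨h1, h2⟩ h3⟩)
  rw [le_antisymm this hy.2]
  exact hy.1

theorem fixed_sup {N : Type*} {S : N → Type*} [∀ i, CompleteLattice (S i)]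
    (M : ∀ i, (∀ j, S j) → Set (S i))
    (hasc : ∀ i x y, x ≤ y → ∀ a ∈ M i x, ∀ b ∈ M i y, a ⊓ b ∈ M i x ∧ a ⊔ b ∈ M i y)
    (hne : ∀ i x, (M i x).Nonempty)
    (hcc : ∀ i x, ChainCompleteDownwardsOn (M i x))
    (hba : ∀ i x, ChainBoundedAboveOn (M i x))
    (A : Set (∀ j, S j)) (hA : ∀ x ∈ A, ∀ i, x i ∈ M i x) :
    ∃ s : ∀ j, S j, (∀ i, s i ∈ M i s) ∧ (∀ x ∈ A, x ≤ s) ∧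
        ∀ b : ∀ j, S j, (∀ i, b i ∈ M i b) → (∀ x ∈ A, x ≤ b) → s ≤ b := by
  have key : ∀ x : ∀ j, S j, (∀ a ∈ A, a ≤ x) → ∀ i, ∃ m, m ∈ M i x ∧ (∀ a ∈ A, a i ≤ m) ∧
      ∀ z ∈ M i x, (∀ a ∈ A, a i ≤ z) → m ≤ z := by
    intro x hx i
    obtain ⟨g0, hg0⟩ := hne i x
    obtain ⟨g, hg, -, hgmax⟩ := exists_max_aux (M i x) (hba i x) g0 hg0
    have hgA : ∀ a ∈ A, a i ≤ g := fun a ha =>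
      le_sup_left.trans (hgmax _ (hasc i a x (hx a ha) (a i) (hA a ha i) g hg).2 le_sup_right)
    obtain ⟨m, hm, -, hmin⟩ := exists_min_aux {z | z ∈ M i x ∧ ∀ a ∈ A, a i ≤ z} (by
      intro c hc hcne hch
      obtain ⟨q, hq, h1, h2⟩ := hcc i x c (fun z hz => (hc hz).1) hcne hch
      refine ⟨q, ⟨hq, fun a ha => ?_⟩, h1⟩
      exact le_sup_left.trans (h2 (a i ⊔ q) (hasc i a x (hx a ha) (a i) (hA a ha i) q hq).2
        (fun z hz => sup_le ((hc hz).2 a ha) (h1 z hz)))) g ⟨hg, hgA⟩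
    refine ⟨m, hm.1, hm.2, fun z hz hz' => ?_⟩
    exact (hmin (m ⊓ z) ⟨(hasc i x x le_rfl m hm.1 z hz).1,
      fun a ha => le_inf (hm.2 a ha) (hz' a ha)⟩ inf_le_left).trans inf_le_right
  choose! h h1 h2 h3 using key
  let P : Set (∀ j, S j) := {x | (∀ a ∈ A, a ≤ x) ∧ h x ≤ x}
  have hyA : ∀ a ∈ A, a ≤ sInf P := fun a ha => le_sInf fun x hx => hx.1 a ha
  have hmono : ∀ x y, (∀ a ∈ A, a ≤ x) → x ≤ y → h x ≤ h y := by
    intro x y hx hxy i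
    have hy : ∀ a ∈ A, a ≤ y := fun a ha => (hx a ha).trans hxy
    exact (h3 x hx i (h x i ⊓ h y i) (hasc i x y hxy _ (h1 x hx i) _ (h1 y hy i)).1
      (fun a ha => le_inf (h2 x hx i a ha) (h2 y hy i a ha))).trans inf_le_right
  have e1 : h (sInf P) ≤ sInf P :=
    le_sInf fun x hx => (hmono _ x hyA (sInf_le hx)).trans hx.2
  have hhA : ∀ a ∈ A, a ≤ h (sInf P) := fun a ha i => h2 _ hyA i a ha
  have e2 : sInf P ≤ h (sInf P) := sInf_le ⟨hhA, hmono _ _ hhA e1⟩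
  have e : h (sInf P) = sInf P := le_antisymm e1 e2
  refine ⟨sInf P, fun i => ?_, hyA, fun b hb hbA => sInf_le ⟨hbA, fun i => ?_⟩⟩
  · have := h1 _ hyA i
    rwa [e] at this
  · exact h3 b hbA i (b i) (hb i) (fun a ha => hbA a ha i)

theorem combine_self {N : Type*} {S : N → Type*} (i : N) (x : ∀ j, S j) :
    combine i (x i) (fun j => x j.1) = x := by
  funext j
  unfold combine
  split_ifs with h
  · subst h; rfl
  · rfl

/-- Theorem 4.11: a normal form game in which every strategy set is a complete lattice,
every section of a payoff function is weakly quasisupermodular, every payoff function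
satisfies the single crossing property, and every upper level set of a section is
chain-complete downwards and chain-bounded above, has a nonempty complete lattice of
Nash equilibria: every set of Nash equilibria has a least upper bound and a greatest
lower bound among the Nash equilibria. -/
theorem nashEquilibria_nonempty_completeLattice {N : Type*} [Nonempty N] {S : N → Type*}
    [∀ i, CompleteLattice (S i)] {C : N → Type*} [∀ i, LinearOrder (C i)]
    (u : ∀ i, (∀ j, S j) → C i)
    (hwqs : ∀ i, ∀ t : ∀ j : {j : N // j ≠ i}, S j.1,
      WeaklyQuasisupermodular (fun a : S i => u i (combine i a t)))
    (hsc : ∀ i, ∀ a a' : S i, a < a' → ∀ t t' : (∀ j : {j : N // j ≠ i}, S j.1), t < t' →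
      (u i (combine i a t) ≤ u i (combine i a' t) →
        u i (combine i a t') ≤ u i (combine i a' t')) ∧
      (u i (combine i a t) < u i (combine i a' t) →
        u i (combine i a t') < u i (combine i a' t')))
    (hcc : ∀ i, ∀ t : ∀ j : {j : N // j ≠ i}, S j.1, ∀ c : C i,
      ChainCompleteDownwardsOn {a : S i | c ≤ u i (combine i a t)})
    (hba : ∀ i, ∀ t : ∀ j : {j : N // j ≠ i}, S j.1, ∀ c : C i,
      ChainBoundedAboveOn {a : S i | c ≤ u i (combine i a t)}) :
    (∃ x : ∀ j, S j, IsNashEquilibrium u x) ∧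
    ∀ A : Set (∀ j, S j), (∀ x ∈ A, IsNashEquilibrium u x) →
      (∃ s : ∀ j, S j, IsNashEquilibrium u s ∧ (∀ x ∈ A, x ≤ s) ∧
        ∀ b : ∀ j, S j, IsNashEquilibrium u b → (∀ x ∈ A, x ≤ b) → s ≤ b) ∧
      (∃ m : ∀ j, S j, IsNashEquilibrium u m ∧ (∀ x ∈ A, m ≤ x) ∧
        ∀ b : ∀ j, S j, IsNashEquilibrium u b → (∀ x ∈ A, b ≤ x) → b ≤ m) := by
  classical
  let F : ∀ i, S i → (∀ j, S j) → C i := fun i a x => u i (combine i a (fun j => x j.1))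
  let M : ∀ i, (∀ j, S j) → Set (S i) := fun i x => {a | ∀ b, F i b x ≤ F i a x}
  have hw : ∀ i x, WeaklyQuasisupermodular (fun a => F i a x) := fun i x => hwqs i _
  have hNash : ∀ x, IsNashEquilibrium u x ↔ ∀ i, x i ∈ M i x := by
    intro x
    have : ∀ i, F i (x i) x = u i x := fun i => by simp only [F, combine_self]
    simp only [IsNashEquilibrium, M, Set.mem_ofPred_eq, this]
    rfl
  have hne : ∀ i x, (M i x).Nonempty := fun i x =>
    exists_argmax (fun a => F i a x) (hw i x) (fun c => hcc i _ c) (fun c => hba i _ c)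
  have hlev : ∀ i x, ∃ c, M i x = {a | c ≤ F i a x} := by
    intro i x
    obtain ⟨p, hp⟩ := hne i x
    refine ⟨F i p x, ?_⟩
    ext a
    exact ⟨fun ha => ha p, fun ha b => (hp b).trans ha⟩
  have hsc' : ∀ i x y, x ≤ y → ∀ a a', a ≤ a' →
      (F i a x ≤ F i a' x → F i a y ≤ F i a' y) ∧ (F i a x < F i a' x → F i a y < F i a' y) := by
    intro i x y hxy a a' ha
    rcases ha.eq_or_lt with rfl | ha
    · simp
    have ht : (fun j : {j : N // j ≠ i} => x j.1) ≤ (fun j : {j : N // j ≠ i} => y j.1) := fun j => hxy j.1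
    rcases ht.eq_or_lt with ht | ht
    · have : ∀ b, F i b x = F i b y := fun b => by simp only [F, ht]
      simp only [this]
      exact ⟨id, id⟩
    · exact hsc i a a' ha _ _ ht
  have hasc : ∀ i x y, x ≤ y → ∀ a ∈ M i x, ∀ b ∈ M i y, a ⊓ b ∈ M i x ∧ a ⊔ b ∈ M i y := by
    intro i x y hxy a ha b hb
    constructor
    · have : F i a x ≤ F i (a ⊓ b) x := by
        by_contra hcon
        have e : F i a x ⊓ F i b x < F i (a ⊔ b) x := (hw i x a b).1 (not_le.1 hcon)
        rcases inf_lt_iff.1 e with e | e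
        · exact absurd (ha (a ⊔ b)) (not_le.2 e)
        · exact absurd (hb (a ⊔ b)) (not_le.2 ((hsc' i x y hxy _ _ le_sup_right).2 e))
      exact fun z => (ha z).trans this
    · have : F i b y ≤ F i (a ⊔ b) y := by
        by_contra hcon
        rw [not_le, sup_comm] at hcon
        have e : F i b y ⊓ F i a y < F i (b ⊓ a) y := (hw i y b a).2 hcon
        rcases inf_lt_iff.1 e with e | e
        · exact absurd (hb (b ⊓ a)) (not_le.2 e)
        · exact absurd ((hsc' i x y hxy _ _ inf_le_right).1 (ha (b ⊓ a))) (not_le.2 e)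
      exact fun z => (hb z).trans this
  have hM1 : ∀ i x, ChainCompleteDownwardsOn (M i x) := by
    intro i x
    obtain ⟨c, hc⟩ := hlev i x
    rw [hc]
    exact hcc i _ c
  have hM2 : ∀ i x, ChainBoundedAboveOn (M i x) := by
    intro i x
    obtain ⟨c, hc⟩ := hlev i x
    rw [hc]
    exact hba i _ c
  have main := fixed_sup M hasc hne hM1 hM2
  simp only [hNash]
  refine ⟨?_, fun A hA => ⟨main A hA, ?_⟩⟩
  · obtain ⟨s, hs, -⟩ := main ∅ (by simp)
    exact ⟨s, hs⟩
  · obtain ⟨s, hs, h1, h2⟩ := main {b | (∀ i, b i ∈ M i b) ∧ ∀ x ∈ A, b ≤ x} (fun b hb => hb.1)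
    exact ⟨s, hs, fun x hx => h2 x (hA x hx) (fun b hb => hb.2 x hx),
      fun b hb hb' => h1 b ⟨hb, hb'⟩⟩
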